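/- arXiv:math/0003222 — 8 statements merged into one kernel-verified Lean document; each statement's English description precedes it below -/
import Mathlib

section
/- The set of discrete data with nonempty wall is finite. Precisely: the set of triples δ = (s, e, ν), where s is an integer with 0 < s < r, e is an integer, and ν : {1,…,n} × {1,…,r} → {0,1} satisfies ∑_{j=1}^r ν_{i,j} = s for each i, such that the wall W(δ) is nonempty, is a finite set; consequently there are only finitely many walls in the weight space A. -/
open Finset

/-- The weight space `A`: tuples `α` with `1 > α i 1 > ⋯ > α i r ≥ 0` for each `i`. -/
def WeightSpace (n r : ℕ) : Set (Fin n → Fin r → ℝ) :=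
  {α | ∀ i, StrictAnti (α i) ∧ (∀ j, α i j < 1) ∧ ∀ j, 0 ≤ α i j}

/-- Discrete data `δ = (s, e, ν)`: `0 < s < r`, `e : ℤ`, and `ν` taking values in `{0,1}`
with `∑ j, ν i j = s` for each `i`. -/
def IsDiscreteData (n r : ℕ) (δ : ℤ × ℤ × (Fin n → Fin r → ℤ)) : Prop :=
  0 < δ.1 ∧ δ.1 < (r : ℤ) ∧ (∀ i j, δ.2.2 i j = 0 ∨ δ.2.2 i j = 1) ∧
    ∀ i, ∑ j, δ.2.2 i j = δ.1

/-- The wall determined by discrete data `δ`. -/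
def Wall (n r : ℕ) (d : ℤ) (δ : ℤ × ℤ × (Fin n → Fin r → ℤ)) :
    Set (Fin n → Fin r → ℝ) :=
  {α ∈ WeightSpace n r |
    (δ.1 : ℝ) * ((d : ℝ) + ∑ i, ∑ j, α i j) =
      (r : ℝ) * ((δ.2.1 : ℝ) + ∑ i, ∑ j, (δ.2.2 i j : ℝ) * α i j)}

/-- The set of discrete data with nonempty wall is finite; consequently there are only
finitely many walls. -/
theorem finitely_many_walls (r n : ℕ) (hr : 2 ≤ r) (hn : 1 ≤ n) (d : ℤ) :
    {δ : ℤ × ℤ × (Fin n → Fin r → ℤ) |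
        IsDiscreteData n r δ ∧ (Wall n r d δ).Nonempty}.Finite ∧
      {W : Set (Fin n → Fin r → ℝ) |
        ∃ δ, IsDiscreteData n r δ ∧ (Wall n r d δ).Nonempty ∧ W = Wall n r d δ}.Finite := by
  have key : {δ : ℤ × ℤ × (Fin n → Fin r → ℤ) |
        IsDiscreteData n r δ ∧ (Wall n r d δ).Nonempty}.Finite := by
    have hfin : ((Set.Icc (0:ℤ) r) ×ˢ ((Set.Icc (-(|d| + 2 * (n * r)) : ℤ) (|d| + 2 * (n * r))) ×ˢ
        (Set.Icc (0 : Fin n → Fin r → ℤ) 1))).Finite :=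
      (Set.finite_Icc _ _).prod ((Set.finite_Icc _ _).prod (Set.finite_Icc _ _))
    refine hfin.subset ?_
    rintro ⟨s, e, ν⟩ ⟨⟨h0, h1, h2, -⟩, α, hα, hw⟩
    dsimp only at h0 h1 h2 hw
    have hν : ∀ i j, (0:ℝ) ≤ (ν i j : ℝ) ∧ (ν i j : ℝ) ≤ 1 := by
      intro i j
      rcases h2 i j with h | h <;> simp [h]
    have hbd : ∀ f : Fin n → Fin r → ℝ, (∀ i j, 0 ≤ f i j ∧ f i j ≤ 1) →
        0 ≤ ∑ i, ∑ j, f i j ∧ ∑ i, ∑ j, f i j ≤ (n : ℝ) * r := by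
      intro f hf
      refine ⟨Finset.sum_nonneg fun i _ => Finset.sum_nonneg fun j _ => (hf i j).1, ?_⟩
      calc ∑ i, ∑ j, f i j ≤ ∑ i : Fin n, ∑ j : Fin r, (1:ℝ) :=
            Finset.sum_le_sum fun i _ => Finset.sum_le_sum fun j _ => (hf i j).2
        _ = (n : ℝ) * r := by simp
    have hA := hbd α fun i j => ⟨(hα i).2.2 j, ((hα i).2.1 j).le⟩
    have hB := hbd (fun i j => (ν i j : ℝ) * α i j) fun i j =>
      ⟨mul_nonneg (hν i j).1 ((hα i).2.2 j),
        mul_le_one₀ (hν i j).2 ((hα i).2.2 j) ((hα i).2.1 j).le⟩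
    generalize (∑ i, ∑ j, α i j) = A at *
    generalize (∑ i, ∑ j, (ν i j : ℝ) * α i j) = B at *
    have hs0 : (0:ℝ) < s := by exact_mod_cast h0
    have hsr : (s:ℝ) < r := by exact_mod_cast h1
    have hr0 : (0:ℝ) < r := hs0.trans hsr
    have hab : |(d:ℝ) + A| ≤ |(d:ℝ)| + n * r :=
      (abs_add_le _ _).trans (by rw [abs_of_nonneg hA.1]; linarith [hA.2])
    have heB : |(e:ℝ) + B| ≤ |(d:ℝ)| + n * r := by
      have h3 : (r:ℝ) * |(e:ℝ) + B| = s * |(d:ℝ) + A| := by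
        rw [← abs_of_pos hr0, ← abs_mul, ← hw, abs_mul, abs_of_pos hs0]
      have h4 : (s:ℝ) * |(d:ℝ) + A| ≤ r * (|(d:ℝ)| + n * r) :=
        mul_le_mul hsr.le hab (abs_nonneg _) hr0.le
      exact le_of_mul_le_mul_left (h3.trans_le h4) hr0
    have h5 := abs_le.1 heB
    refine ⟨⟨h0.le, h1.le⟩, ⟨?_, ?_⟩, fun i j => ?_, fun i j => ?_⟩
    · have : (-(|(d:ℝ)| + 2 * (n * r))) ≤ (e:ℝ) := by linarith [h5.1, hB.2]
      exact_mod_cast this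
    · have : (e:ℝ) ≤ (|(d:ℝ)| + 2 * (n * r)) := by linarith [h5.2, hB.1, hB.2]
      exact_mod_cast this
    · rcases h2 i j with h | h <;> simp [h]
    · rcases h2 i j with h | h <;> simp [h]
  refine ⟨key, (key.image (Wall n r d)).subset ?_⟩
  rintro W ⟨δ, h1, h2, rfl⟩
  exact ⟨δ, ⟨h1, h2⟩, rfl⟩
end

section
/- If δ = (s, e, ν) is discrete data whose wall W(δ) is nonempty, then |r·e − s·d| < n·r·s. (This is the quantitative bound underlying the finiteness of the set of walls: for each fixed s and ν, only finitely many integers e give a hyperplane touching the weight space A.) -/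
open Finset

/-- If the wall of discrete data `(s, e, ν)` is nonempty, then `|r·e − s·d| < n·r·s`. -/
theorem wall_nonempty_bound (r n : ℕ) (hr : 2 ≤ r) (hn : 1 ≤ n) (d : ℤ)
    (s e : ℤ) (ν : Fin n → Fin r → ℤ)
    (hδ : IsDiscreteData n r (s, e, ν))
    (hW : (Wall n r d (s, e, ν)).Nonempty) :
    |(r : ℤ) * e - s * d| < (n : ℤ) * r * s := by
  obtain ⟨hs0, -, hν, hsum⟩ := hδ
  obtain ⟨α, hα, heq⟩ := hW
  simp only at hs0 hν hsum heq
  have hs : (0 : ℝ) < s := by exact_mod_cast hs0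
  have hr0 : (0 : ℝ) < r := by exact_mod_cast (by omega : 0 < r)
  have hne : (Finset.univ : Finset (Fin n)).Nonempty := ⟨⟨0, hn⟩, Finset.mem_univ _⟩
  have hne' : (Finset.univ : Finset (Fin r)).Nonempty := ⟨⟨0, by omega⟩, Finset.mem_univ _⟩
  have hν0 : ∀ i j, (0 : ℝ) ≤ ν i j := by
    intro i j
    rcases hν i j with h | h <;> simp [h]
  have hA0 : 0 ≤ ∑ i, ∑ j, α i j :=
    Finset.sum_nonneg fun i _ => Finset.sum_nonneg fun j _ => (hα i).2.2 j
  have hB0 : 0 ≤ ∑ i, ∑ j, (ν i j : ℝ) * α i j :=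
    Finset.sum_nonneg fun i _ => Finset.sum_nonneg fun j _ =>
      mul_nonneg (hν0 i j) ((hα i).2.2 j)
  have hA1 : ∑ i, ∑ j, α i j < (n : ℝ) * r := by
    calc ∑ i, ∑ j, α i j < ∑ _i : Fin n, ∑ _j : Fin r, (1 : ℝ) :=
          Finset.sum_lt_sum_of_nonempty hne fun i _ =>
            Finset.sum_lt_sum_of_nonempty hne' fun j _ => (hα i).2.1 j
      _ = (n : ℝ) * r := by simp
  have hB1 : ∑ i, ∑ j, (ν i j : ℝ) * α i j < (n : ℝ) * s := by
    calc ∑ i, ∑ j, (ν i j : ℝ) * α i j < ∑ i : Fin n, ∑ j : Fin r, (ν i j : ℝ) := by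
          refine Finset.sum_lt_sum_of_nonempty hne fun i _ => ?_
          refine Finset.sum_lt_sum (fun j _ =>
            mul_le_of_le_one_right (hν0 i j) ((hα i).2.1 j).le) ?_
          by_contra hcon
          push Not at hcon
          have hz : ∀ j, ν i j = 0 := by
            intro j
            rcases hν i j with h | h
            · exact h
            · have h1 := hcon j (Finset.mem_univ _)
              have h2 := (hα i).2.1 j
              simp only [h, Int.cast_one, one_mul] at h1
              linarith
          have h3 := hsum i
          simp [hz] at h3
          omega
      _ = ∑ i : Fin n, (s : ℝ) := by
          refine Finset.sum_congr rfl fun i _ => ?_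
          rw [← hsum i]
          push_cast
          rfl
      _ = (n : ℝ) * s := by simp
  have key : |(r : ℝ) * e - s * d| < (n : ℝ) * r * s := by
    have h1 := mul_lt_mul_of_pos_left hA1 hs
    have h2 := mul_lt_mul_of_pos_left hB1 hr0
    have h3 := mul_nonneg hs.le hA0
    have h4 := mul_nonneg hr0.le hB0
    rw [abs_lt]
    constructor <;> linarith
  exact_mod_cast key
end

section
/- Uniqueness of discrete data for a wall (Remark 2.6 of the paper): if δ = (s, e, ν) and δ' = (s', e', ν') are discrete data with W(δ) = W(δ') and this common wall is nonempty, then either δ' = δ, or δ' = (r − s, d − e, 1 − ν); i.e., the only other discrete data giving rise to the same wall as δ is its complement. -/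
open Finset

theorem wall_iff {n r : ℕ} {d s e : ℤ} {ν : Fin n → Fin r → ℤ} {α : Fin n → Fin r → ℝ} :
    α ∈ Wall n r d (s, e, ν) ↔ α ∈ WeightSpace n r ∧
      ∑ i, ∑ j, ((s : ℝ) - r * ν i j) * α i j = r * e - s * d := by
  have h : ∑ i, ∑ j, ((s : ℝ) - r * ν i j) * α i j
      = s * (∑ i, ∑ j, α i j) - r * ∑ i, ∑ j, (ν i j : ℝ) * α i j := by
    simp only [Finset.mul_sum, ← Finset.sum_sub_distrib]
    refine Finset.sum_congr rfl fun i _ => Finset.sum_congr rfl fun j _ => ?_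
    ring
  rw [h]
  simp only [Wall, Set.mem_ofPred_eq]
  refine and_congr_right fun _ => ?_
  constructor <;> intro h <;> linarith

theorem exists_small {n r : ℕ} {α : Fin n → Fin r → ℝ}
    (h : ∀ i, StrictAnti (α i) ∧ (∀ j, α i j < 1) ∧ ∀ j, 0 < α i j)
    (β : Fin n → Fin r → ℝ) :
    ∃ ε : ℝ, 0 < ε ∧ (fun i j => α i j + ε * β i j) ∈ WeightSpace n r := by
  have key : ∀ (a b c f : ℝ), a < b → ∀ᶠ ε in nhds (0 : ℝ), a + ε * c < b + ε * f := by
    intro a b c f hab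
    have h1 : Filter.Tendsto (fun ε : ℝ => a + ε * c) (nhds 0) (nhds a) := by
      have : Continuous (fun ε : ℝ => a + ε * c) := by fun_prop
      simpa using this.tendsto 0
    have h2 : Filter.Tendsto (fun ε : ℝ => b + ε * f) (nhds 0) (nhds b) := by
      have : Continuous (fun ε : ℝ => b + ε * f) := by fun_prop
      simpa using this.tendsto 0
    exact h1.eventually_lt h2 hab
  have h1 : ∀ᶠ ε in nhds (0 : ℝ), ∀ i j k, j < k → α i k + ε * β i k < α i j + ε * β i j := by
    simp only [Filter.eventually_all]
    exact fun i j k hjk => key _ _ _ _ ((h i).1 hjk)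
  have h2 : ∀ᶠ ε in nhds (0 : ℝ), ∀ i j, α i j + ε * β i j < 1 + ε * 0 := by
    simp only [Filter.eventually_all]
    exact fun i j => key _ _ _ _ ((h i).2.1 j)
  have h3 : ∀ᶠ ε in nhds (0 : ℝ), ∀ i j, 0 + ε * 0 < α i j + ε * β i j := by
    simp only [Filter.eventually_all]
    exact fun i j => key _ _ _ _ ((h i).2.2 j)
  have h4 := ((h1.and (h2.and h3)).filter_mono
    (nhdsWithin_le_nhds (s := Set.Ioi 0))).and self_mem_nhdsWithin
  obtain ⟨ε, ⟨h1, h2, h3⟩, hε⟩ := h4.exists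
  refine ⟨ε, hε, fun i => ⟨fun j k hjk => h1 i j k hjk, fun j => ?_, fun j => ?_⟩⟩
  · simpa using h2 i j
  · simpa using (h3 i j).le

theorem exists_shift {n r : ℕ} {α : Fin n → Fin r → ℝ} (h : α ∈ WeightSpace n r) :
    ∃ ε : ℝ, ∀ i, StrictAnti (fun j => α i j + ε) ∧ (∀ j, α i j + ε < 1) ∧
      ∀ j, 0 < α i j + ε := by
  have h2 : ∀ᶠ ε in nhds (0 : ℝ), ∀ i j, ε < 1 - α i j := by
    simp only [Filter.eventually_all]
    exact fun i j => eventually_lt_nhds (by linarith [(h i).2.1 j])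
  have h4 := (h2.filter_mono (nhdsWithin_le_nhds (s := Set.Ioi 0))).and self_mem_nhdsWithin
  obtain ⟨ε, h2, hε⟩ := h4.exists
  have hε : 0 < ε := hε
  refine ⟨ε, fun i => ⟨fun j k hjk => ?_, fun j => ?_, fun j => ?_⟩⟩
  · have := (h i).1 hjk
    simpa using this
  · linarith [h2 i j]
  · linarith [(h i).2.2 j]

/-- Remark 2.6: the only other discrete data giving rise to the same nonempty wall as
`(s, e, ν)` is the complement `(r − s, d − e, 1 − ν)`. -/
theorem wall_determines_discreteData (r n : ℕ) (hr : 2 ≤ r) (hn : 1 ≤ n) (d : ℤ)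
    (s e : ℤ) (ν : Fin n → Fin r → ℤ) (s' e' : ℤ) (ν' : Fin n → Fin r → ℤ)
    (hδ : IsDiscreteData n r (s, e, ν)) (hδ' : IsDiscreteData n r (s', e', ν'))
    (hW : Wall n r d (s, e, ν) = Wall n r d (s', e', ν'))
    (hne : (Wall n r d (s, e, ν)).Nonempty) :
    (s', e', ν') = (s, e, ν) ∨
      (s', e', ν') = ((r : ℤ) - s, d - e, fun i j => 1 - ν i j) := by
  obtain ⟨hs0, hsr, hν, hsum⟩ := hδ
  obtain ⟨hs0', hsr', hν', hsum'⟩ := hδ'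
  simp only at hs0 hsr hν hsum hs0' hsr' hν' hsum'
  obtain ⟨α, hα⟩ := hne
  have hα' := hα
  rw [hW] at hα'
  have hL := (wall_iff.1 hα).2
  have hL' := (wall_iff.1 hα').2
  obtain ⟨η, hη⟩ := exists_shift hα.1
  have hrow : ∀ (t : ℤ) (μ : Fin n → Fin r → ℤ), (∀ i, ∑ j, μ i j = t) →
      ∑ i, ∑ j, ((t : ℝ) - r * μ i j) * (α i j + η) =
      ∑ i, ∑ j, ((t : ℝ) - r * μ i j) * α i j := by
    intro t μ hμ
    refine Finset.sum_congr rfl fun i _ => ?_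
    have h0 : ∑ j, ((t : ℝ) - r * μ i j) = 0 := by
      rw [Finset.sum_sub_distrib, ← Finset.mul_sum, ← Int.cast_sum Finset.univ (μ i), hμ i]
      simp
    simp only [mul_add, Finset.sum_add_distrib, ← Finset.sum_mul, h0]
    simp
  have key : ∀ β : Fin n → Fin r → ℝ, ∑ i, ∑ j, ((s : ℝ) - r * ν i j) * β i j = 0 →
      ∑ i, ∑ j, ((s' : ℝ) - r * ν' i j) * β i j = 0 := by
    intro β hβ
    obtain ⟨ε, hε, hmem⟩ := exists_small hη β
    have hexp : ∀ (t : ℤ) (μ : Fin n → Fin r → ℤ),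
        ∑ i, ∑ j, ((t : ℝ) - r * μ i j) * (α i j + η + ε * β i j) =
        ∑ i, ∑ j, ((t : ℝ) - r * μ i j) * (α i j + η) +
        ε * ∑ i, ∑ j, ((t : ℝ) - r * μ i j) * β i j := by
      intro t μ
      simp only [Finset.mul_sum, ← Finset.sum_add_distrib]
      refine Finset.sum_congr rfl fun i _ => Finset.sum_congr rfl fun j _ => ?_
      ring
    have h1 : (fun i j => α i j + η + ε * β i j) ∈ Wall n r d (s, e, ν) :=
      wall_iff.2 ⟨hmem, by rw [hexp, hrow s ν hsum, hβ, hL]; ring⟩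
    rw [hW] at h1
    have h2 := (wall_iff.1 h1).2
    rw [hexp, hrow s' ν' hsum', hL'] at h2
    have h3 : ε * ∑ i, ∑ j, ((s' : ℝ) - r * ν' i j) * β i j = 0 := by linarith
    exact (mul_eq_zero.1 h3).resolve_left hε.ne'
  have prop : ∀ i j k l, (s' - r * ν' i j) * (s - r * ν k l) =
      (s' - r * ν' k l) * (s - r * ν i j) := by
    intro i j k l
    have hpt : ∀ (f : Fin n → Fin r → ℝ) (x y : ℝ),
        ∑ a, ∑ b, f a b * ((if a = i then if b = j then x else 0 else 0) -
          (if a = k then if b = l then y else 0 else 0)) = f i j * x - f k l * y := by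
      intro f x y
      simp [mul_sub, Finset.sum_sub_distrib, mul_ite, Finset.sum_ite_irrel]
    have h := key (fun a b => (if a = i then if b = j then ((s : ℝ) - r * ν k l) else 0 else 0) -
          (if a = k then if b = l then ((s : ℝ) - r * ν i j) else 0 else 0))
      (by rw [hpt (fun a b => (s : ℝ) - r * ν a b)]; ring)
    rw [hpt (fun a b => (s' : ℝ) - r * ν' a b)] at h
    have h := sub_eq_zero.1 h
    exact_mod_cast h
  let i0 : Fin n := ⟨0, hn⟩
  obtain ⟨j1, hj1⟩ : ∃ j, ν i0 j = 1 := by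
    by_contra! hc
    have : ∑ j, ν i0 j = 0 := Finset.sum_eq_zero fun j _ => (hν i0 j).resolve_right (hc j)
    have := hsum i0
    omega
  obtain ⟨j0, hj0⟩ : ∃ j, ν i0 j = 0 := by
    by_contra! hc
    have : ∑ j, ν i0 j = ∑ j : Fin r, (1 : ℤ) :=
      Finset.sum_congr rfl fun j _ => (hν i0 j).resolve_left (hc j)
    have := hsum i0
    simp at *
    omega
  have hr0 : (0 : ℤ) < r := by omega
  have hr0R : (0 : ℝ) < r := by exact_mod_cast hr0
  have h01 := prop i0 j1 i0 j0
  rw [hj1, hj0] at h01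
  rcases hν' i0 j1 with h1 | h1 <;> rcases hν' i0 j0 with h0 | h0 <;> rw [h1, h0] at h01
  · exfalso
    have : s' * r = 0 := by linarith
    rcases mul_eq_zero.1 this with h | h <;> omega
  · right
    have hs : s' = r - s := by
      have : (r : ℤ) * (s' - (r - s)) = 0 := by linarith
      rcases mul_eq_zero.1 this with h | h <;> omega
    have hν2 : ν' = fun i j => 1 - ν i j := by
      funext i j
      have hp := prop i j i0 j0
      rw [hj0, h0, hs] at hp
      have : s * (r * (1 - ν i j - ν' i j)) = 0 := by linarith
      rcases mul_eq_zero.1 this with h | h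
      · omega
      rcases mul_eq_zero.1 h with h | h <;> omega
    have he : e' = d - e := by
      have hneg : ∑ i, ∑ j, ((s' : ℝ) - r * ν' i j) * α i j =
          - ∑ i, ∑ j, ((s : ℝ) - r * ν i j) * α i j := by
        simp only [← Finset.sum_neg_distrib]
        refine Finset.sum_congr rfl fun i _ => Finset.sum_congr rfl fun j _ => ?_
        rw [hs, hν2]; push_cast; ring
      rw [hL, hL', hs] at hneg
      push_cast at hneg
      have : (r : ℝ) * (e' - (d - e)) = 0 := by linarith
      have := (mul_eq_zero.1 this).resolve_left hr0R.ne'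
      have : (e' : ℝ) = d - e := by linarith
      exact_mod_cast this
    rw [hs, he, hν2]
  · left
    have hs : s' = s := by
      have : (r : ℤ) * (s' - s) = 0 := by linarith
      rcases mul_eq_zero.1 this with h | h <;> omega
    have hν2 : ν' = ν := by
      funext i j
      have hp := prop i j i0 j0
      rw [hj0, h0, hs] at hp
      have : s * (r * (ν i j - ν' i j)) = 0 := by linarith
      rcases mul_eq_zero.1 this with h | h
      · omega
      rcases mul_eq_zero.1 h with h | h <;> omega
    have he : e' = e := by
      rw [hs, hν2, hL] at hL'
      have : (r : ℝ) * (e' - e) = 0 := by linarith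
      have := (mul_eq_zero.1 this).resolve_left hr0R.ne'
      have : (e' : ℝ) = e := by linarith
      exact_mod_cast this
    rw [hs, he, hν2]
  · exfalso
    have : (s' - r) * r = 0 := by linarith
    rcases mul_eq_zero.1 this with h | h <;> omega
end

section
/- Let A ⊆ ℝ^N be a nonempty open convex set, and let f, g : ℝ^N → ℝ be affine functions (each of the form x ↦ ℓ(x) + c with ℓ linear) whose linear parts are nonzero. If { x ∈ A : f(x) = 0 } = { x ∈ A : g(x) = 0 } and this common zero set is nonempty, then there exists a nonzero real number c such that g = c·f. -/
/-- Two affine functions with nonzero linear parts cutting out the same nonempty zero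
locus inside a nonempty open convex set `A ⊆ ℝ^N` are proportional by a nonzero constant. -/
theorem affine_functions_same_zero_locus (N : ℕ) (hN : 1 ≤ N)
    (A : Set (Fin N → ℝ)) (hA : A.Nonempty) (hAopen : IsOpen A) (hAconv : Convex ℝ A)
    (f g : (Fin N → ℝ) → ℝ)
    (L M : (Fin N → ℝ) →ₗ[ℝ] ℝ) (a b : ℝ)
    (hL : L ≠ 0) (hM : M ≠ 0)
    (hf : ∀ x, f x = L x + a) (hg : ∀ x, g x = M x + b)
    (hEq : {x ∈ A | f x = 0} = {x ∈ A | g x = 0})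
    (hne : {x ∈ A | f x = 0}.Nonempty) :
    ∃ c : ℝ, c ≠ 0 ∧ g = fun x => c * f x := by
  obtain ⟨p, hpA, hfp⟩ := hne
  have hgp : g p = 0 := by
    have h : p ∈ {x ∈ A | g x = 0} := hEq ▸ ⟨hpA, hfp⟩
    exact h.2
  have hker : ∀ v, L v = 0 → M v = 0 := by
    intro v hv
    have hcont : Continuous (fun t : ℝ => p + t • v) := by fun_prop
    have hev : ∀ᶠ t in nhds (0 : ℝ), p + t • v ∈ A :=
      hcont.continuousAt.eventually_mem (hAopen.mem_nhds (by simpa using hpA))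
    obtain ⟨e, he, hball⟩ := Metric.eventually_nhds_iff.1 hev
    have hmem : p + (e / 2) • v ∈ A := by
      apply hball
      rw [Real.dist_eq, sub_zero, abs_of_pos (by linarith)]
      linarith
    have hfz : f (p + (e / 2) • v) = 0 := by
      rw [hf] at hfp ⊢
      simp only [map_add, map_smul, hv, smul_eq_mul]
      linarith
    have h : p + (e / 2) • v ∈ {x ∈ A | g x = 0} := hEq ▸ ⟨hmem, hfz⟩
    have h2 : g (p + (e / 2) • v) = 0 := h.2
    rw [hg] at hgp h2
    simp only [map_add, map_smul, smul_eq_mul] at h2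
    have h3 : e / 2 * M v = 0 := by linarith
    rcases mul_eq_zero.1 h3 with h4 | h4
    · linarith
    · exact h4
  obtain ⟨u, hu⟩ : ∃ u, L u ≠ 0 := by
    by_contra! h
    exact hL (LinearMap.ext h)
  have hprop : ∀ x, M x = M u / L u * L x := by
    intro x
    have h := hker (x - (L x / L u) • u) (by
      simp only [map_sub, map_smul, smul_eq_mul]
      field_simp
      ring)
    simp only [map_sub, map_smul, smul_eq_mul] at h
    have h2 : M x = L x / L u * M u := by linarith
    rw [h2]
    ring
  refine ⟨M u / L u, ?_, ?_⟩
  · intro h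
    apply hM
    refine LinearMap.ext fun x => ?_
    rw [hprop x, h, zero_mul, LinearMap.zero_apply]
  · funext x
    rw [hf] at hfp
    rw [hg] at hgp
    rw [hg, hf]
    have h1 := hprop x
    have h2 := hprop p
    have ha : a = - L p := by linarith
    have hb : b = - M p := by linarith
    rw [ha, hb, h1, h2]
    ring
end

section
/- A polynomial f ∈ R is invariant under the ℂˣ-action, i.e. satisfies f(λu, λ⁻¹v) = f(u, v) for all λ ∈ ℂˣ, u ∈ ℂ^{m+1}, v ∈ ℂ^{n+1} (where f is evaluated by substituting λu_i for x_i and λ⁻¹v_j for y_j), if and only if f belongs to the ℂ-subalgebra of R generated by the (m+1)(n+1) products x_i·y_j. -/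
open MvPolynomial

/-- The variables of `R = ℂ[x_0,…,x_m, y_0,…,y_n]`: `inl i` is `x_i`, `inr j` is `y_j`. -/
abbrev XYVar (m n : ℕ) := Sum (Fin (m + 1)) (Fin (n + 1))

lemma monomial_mem_adjoin_xy (m n k : ℕ) : ∀ d : XYVar m n →₀ ℕ,
    (∑ i, d (Sum.inl i) = k) → (∑ j, d (Sum.inr j) = k) →
    monomial d (1 : ℂ) ∈ Algebra.adjoin ℂ {p : MvPolynomial (XYVar m n) ℂ |
        ∃ (i : Fin (m + 1)) (j : Fin (n + 1)), p = X (Sum.inl i) * X (Sum.inr j)} := by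
  induction k with
  | zero =>
    intro d h1 h2
    have : d = 0 := by
      ext v
      simp only [Finset.sum_eq_zero_iff, Finset.mem_univ, true_imp_iff] at h1 h2
      rcases v with i | j
      · exact h1 i
      · exact h2 j
    subst this
    exact one_mem _
  | succ k ih =>
    intro d h1 h2
    obtain ⟨i, -, hi⟩ := Finset.exists_ne_zero_of_sum_ne_zero (h1.trans_ne (Nat.succ_ne_zero k))
    obtain ⟨j, -, hj⟩ := Finset.exists_ne_zero_of_sum_ne_zero (h2.trans_ne (Nat.succ_ne_zero k))
    have hle : Finsupp.single (Sum.inl i) 1 + Finsupp.single (Sum.inr j) 1 ≤ d := by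
      intro v
      rcases v with a | b
      · by_cases h : i = a
        · subst h; simp; omega
        · simp [h]
      · by_cases h : j = b
        · subst h; simp; omega
        · simp [h]
    obtain ⟨e, rfl⟩ := exists_add_of_le hle
    have e1 : ∑ i, e (Sum.inl i) = k := by
      simp [Finset.sum_add_distrib, Finsupp.single_apply] at h1
      omega
    have e2 : ∑ j, e (Sum.inr j) = k := by
      simp [Finset.sum_add_distrib, Finsupp.single_apply] at h2
      omega
    have : (monomial (Finsupp.single (Sum.inl i) 1 + Finsupp.single (Sum.inr j) 1 + e) (1 : ℂ)) =
        (X (Sum.inl i) * X (Sum.inr j)) * monomial e 1 := by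
      simp [X, monomial_mul]
    rw [this]
    exact mul_mem (Algebra.subset_adjoin ⟨i, j, rfl⟩) (ih e e1 e2)

lemma coeff_scale_xy {σ : Type*} [Fintype σ] (w : σ → ℂ) (f : MvPolynomial σ ℂ) (d : σ →₀ ℕ) :
    coeff d (aeval (fun v => C (w v) * X v) f : MvPolynomial σ ℂ) =
      (∏ v, w v ^ d v) * coeff d f := by
  classical
  induction f using MvPolynomial.induction_on' with
  | monomial e c =>
    have : (aeval (fun v => C (w v) * X v) (monomial e c) : MvPolynomial σ ℂ) =
        monomial e ((∏ v, w v ^ e v) * c) := by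
      rw [aeval_monomial, Finsupp.prod_fintype _ _ (by simp), monomial_eq,
        Finsupp.prod_fintype _ _ (by simp)]
      simp only [mul_pow, Finset.prod_mul_distrib, C_mul, map_prod, C_pow, algebraMap_eq]
      ring
    rw [this, coeff_monomial, coeff_monomial]
    split_ifs with h
    · rw [h]
    · simp
  | add p q hp hq => rw [map_add, coeff_add, coeff_add, hp, hq, mul_add]

/-- A polynomial `f ∈ ℂ[x_0,…,x_m, y_0,…,y_n]` satisfies `f(λu, λ⁻¹v) = f(u, v)` for all
`λ ∈ ℂˣ`, `u ∈ ℂ^{m+1}`, `v ∈ ℂ^{n+1}` if and only if it belongs to the `ℂ`-subalgebra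
generated by the products `x_i·y_j`. -/
theorem invariant_iff_mem_adjoin (m n : ℕ) (f : MvPolynomial (XYVar m n) ℂ) :
    (∀ (l : ℂˣ) (u : Fin (m + 1) → ℂ) (v : Fin (n + 1) → ℂ),
        eval (Sum.elim (fun i => (l : ℂ) * u i) (fun j => (l : ℂ)⁻¹ * v j)) f =
          eval (Sum.elim u v) f) ↔
      f ∈ Algebra.adjoin ℂ {p : MvPolynomial (XYVar m n) ℂ |
        ∃ (i : Fin (m + 1)) (j : Fin (n + 1)), p = X (Sum.inl i) * X (Sum.inr j)} := by
  constructor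
  · intro h
    set w : XYVar m n → ℂ := Sum.elim (fun _ => 2) (fun _ => 2⁻¹) with hw
    have key : (aeval (fun v => C (w v) * X v) f : MvPolynomial (XYVar m n) ℂ) = f := by
      apply MvPolynomial.funext
      intro x
      have h2 := h (Units.mk0 2 two_ne_zero) (fun i => x (Sum.inl i)) (fun j => x (Sum.inr j))
      have hx : Sum.elim (fun i => x (Sum.inl i)) (fun j => x (Sum.inr j)) = x := by
        ext v; rcases v with i | j <;> rfl
      rw [hx] at h2
      rw [← h2]
      simp only [← coe_aeval_eq_eval, RingHom.coe_coe]
      rw [← AlgHom.comp_apply, comp_aeval]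
      congr 2
      ext v
      rcases v with i | j <;> simp [hw]
    rw [f.as_sum]
    refine sum_mem fun d hd => ?_
    have hc := coeff_scale_xy w f d
    rw [key] at hc
    have hne : coeff d f ≠ 0 := mem_support_iff.mp hd
    have h1 : ∏ v, w v ^ d v = 1 := by
      apply mul_right_cancel₀ hne
      rw [← hc, one_mul]
    have h3 : (2 : ℂ) ^ (∑ i, d (Sum.inl i)) = 2 ^ (∑ j, d (Sum.inr j)) := by
      rw [Fintype.prod_sum_type] at h1
      simp only [hw, Sum.elim_inl, Sum.elim_inr, Finset.prod_pow_eq_pow_sum] at h1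
      rw [inv_pow] at h1
      exact (mul_inv_eq_one₀ (pow_ne_zero _ two_ne_zero)).mp h1
    have h4 : ∑ i, d (Sum.inl i) = ∑ j, d (Sum.inr j) :=
      Nat.pow_right_injective le_rfl (by exact_mod_cast h3)
    have : monomial d (coeff d f) = (coeff d f) • monomial d (1 : ℂ) := by
      simp [smul_monomial]
    rw [this]
    exact Subalgebra.smul_mem _ (monomial_mem_adjoin_xy m n _ d h4 rfl) _
  · intro hf l u v
    induction hf using Algebra.adjoin_induction with
    | mem p hp =>
      obtain ⟨i, j, rfl⟩ := hp
      have := l.ne_zero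
      simp only [map_mul, eval_X, Sum.elim_inl, Sum.elim_inr]
      field_simp
    | algebraMap r => simp [algebraMap_eq]
    | add p q _ _ hp hq => rw [map_add, map_add, hp, hq]
    | mul p q _ _ hp hq => rw [map_mul, map_mul, hp, hq]
end

section
/- For points (u, v) and (u', v') of X = ℂ^{m+1} × ℂ^{n+1}, the closures (in the Euclidean topology of X) of the ℂˣ-orbits of (u, v) and of (u', v') have nonempty intersection if and only if u_i·v_j = u'_i·v'_j for all 0 ≤ i ≤ m and 0 ≤ j ≤ n. (Thus orbit-closure equivalence is exactly equality of all the invariants x_i y_j, as in the identification of the affine quotient X/G with Spec R_0.) -/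
/-- The `ℂˣ`-orbit of `(u, v) ∈ ℂ^{m+1} × ℂ^{n+1}` under `λ·(u, v) = (λu, λ⁻¹v)`. -/
def cxOrbit (m n : ℕ) (u : Fin (m + 1) → ℂ) (v : Fin (n + 1) → ℂ) :
    Set ((Fin (m + 1) → ℂ) × (Fin (n + 1) → ℂ)) :=
  {p | ∃ l : ℂˣ, p = (fun i => (l : ℂ) * u i, fun j => (l : ℂ)⁻¹ * v j)}

open Topology Filter in
theorem zero_mem_closure_cxOrbit (m n : ℕ) (u : Fin (m + 1) → ℂ) (v : Fin (n + 1) → ℂ)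
    (h : ∀ i j, u i * v j = 0) : (0, 0) ∈ closure (cxOrbit m n u v) := by
  have huv : u = 0 ∨ v = 0 := by
    by_contra hc
    push Not at hc
    obtain ⟨i, hi⟩ := Function.ne_iff.1 hc.1
    obtain ⟨j, hj⟩ := Function.ne_iff.1 hc.2
    exact mul_ne_zero hi hj (h i j)
  have ht : Tendsto (fun c : ℂ => ((c • u, c • v) : (Fin (m + 1) → ℂ) × (Fin (n + 1) → ℂ)))
      (𝓝[≠] 0) (𝓝 (0, 0)) := by
    have hc : Continuous
        (fun c : ℂ => ((c • u, c • v) : (Fin (m + 1) → ℂ) × (Fin (n + 1) → ℂ))) := by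
      fun_prop
    have := hc.tendsto 0
    simp only [zero_smul] at this
    exact this.mono_left nhdsWithin_le_nhds
  refine mem_closure_of_tendsto ht ?_
  filter_upwards [self_mem_nhdsWithin] with c hc
  have hc0 : c ≠ 0 := hc
  rcases huv with rfl | rfl
  · refine ⟨(Units.mk0 c hc0)⁻¹, ?_⟩
    ext i <;> simp
  · refine ⟨Units.mk0 c hc0, ?_⟩
    ext i <;> simp

theorem invariant_of_mem_closure (m n : ℕ) (u : Fin (m + 1) → ℂ) (v : Fin (n + 1) → ℂ)
    (p : (Fin (m + 1) → ℂ) × (Fin (n + 1) → ℂ)) (hp : p ∈ closure (cxOrbit m n u v))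
    (i : Fin (m + 1)) (j : Fin (n + 1)) : p.1 i * p.2 j = u i * v j := by
  have hcl : IsClosed {q : (Fin (m + 1) → ℂ) × (Fin (n + 1) → ℂ) |
      q.1 i * q.2 j = u i * v j} :=
    isClosed_eq (by fun_prop) continuous_const
  refine closure_minimal ?_ hcl hp
  rintro q ⟨l, rfl⟩
  have := l.ne_zero
  simp only [Set.mem_setOf_eq]
  field_simp

/-- The closures of the orbits of `(u, v)` and `(u', v')` meet if and only if
`u_i·v_j = u'_i·v'_j` for all `i, j`. -/
theorem orbit_closures_meet_iff (m n : ℕ) (u u' : Fin (m + 1) → ℂ)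
    (v v' : Fin (n + 1) → ℂ) :
    (closure (cxOrbit m n u v) ∩ closure (cxOrbit m n u' v')).Nonempty ↔
      ∀ (i : Fin (m + 1)) (j : Fin (n + 1)), u i * v j = u' i * v' j := by
  constructor
  · rintro ⟨p, hp, hp'⟩ i j
    rw [← invariant_of_mem_closure m n u v p hp i j,
      invariant_of_mem_closure m n u' v' p hp' i j]
  · intro h
    by_cases hz : ∀ i j, u i * v j = 0
    · exact ⟨(0, 0), zero_mem_closure_cxOrbit m n u v hz,
        zero_mem_closure_cxOrbit m n u' v' fun i j => by rw [← h i j, hz i j]⟩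
    · push Not at hz
      obtain ⟨i, j, hij⟩ := hz
      have hij' : u' i * v' j ≠ 0 := h i j ▸ hij
      have hu := left_ne_zero_of_mul hij
      have hv := right_ne_zero_of_mul hij
      have hu' := left_ne_zero_of_mul hij'
      have hv' := right_ne_zero_of_mul hij'
      refine ⟨(u', v'), subset_closure ⟨Units.mk0 (v j / v' j) (div_ne_zero hv hv'), ?_⟩,
        subset_closure ⟨1, by simp⟩⟩
      refine Prod.ext (funext fun k => ?_) (funext fun k => ?_)
      · simp only [Units.val_mk0]
        field_simp
        linear_combination -h k j
      · simp only [Units.val_mk0]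
        field_simp
        apply mul_left_cancel₀ hu'
        apply mul_left_cancel₀ hu
        linear_combination u i * v k * h i j - u i * v j * h i k
end

section
/- If u ∈ ℂ^{m+1} and v ∈ ℂ^{n+1} are both nonzero, then the ℂˣ-orbit { (λu, λ⁻¹v) : λ ∈ ℂˣ } of (u, v) is a closed subset of X = ℂ^{m+1} × ℂ^{n+1} in the Euclidean topology. -/
/-- If `u ≠ 0` and `v ≠ 0`, the `ℂˣ`-orbit of `(u, v)` is closed. -/
theorem orbit_isClosed (m n : ℕ) (u : Fin (m + 1) → ℂ) (v : Fin (n + 1) → ℂ)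
    (hu : u ≠ 0) (hv : v ≠ 0) : IsClosed (cxOrbit m n u v) := by
  obtain ⟨a, ha⟩ := Function.ne_iff.mp hu
  obtain ⟨b, hb⟩ := Function.ne_iff.mp hv
  simp only [Pi.zero_apply] at ha hb
  have key : cxOrbit m n u v =
      {p | (∀ i, p.1 i * u a = p.1 a * u i) ∧ (∀ j, p.2 j * v b = p.2 b * v j) ∧
        p.1 a * p.2 b = u a * v b} := by
    ext ⟨x, y⟩
    simp only [cxOrbit, Set.mem_setOf_eq, Prod.mk.injEq]
    constructor
    · rintro ⟨l, rfl, rfl⟩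
      have hl : (l : ℂ) ≠ 0 := l.ne_zero
      refine ⟨fun i => by ring, fun j => by ring, ?_⟩
      field_simp
    · rintro ⟨h1, h2, h3⟩
      have hxa : x a ≠ 0 := by
        intro h
        rw [h, zero_mul] at h3
        exact mul_ne_zero ha hb h3.symm
      refine ⟨Units.mk0 (x a / u a) (div_ne_zero hxa ha), ?_, ?_⟩
      · funext i
        have := h1 i
        simp only [Units.val_mk0]
        field_simp
        linear_combination this
      · funext j
        have := h2 j
        simp only [Units.val_mk0, inv_div]
        rw [div_mul_eq_mul_div, eq_div_iff hxa]
        apply mul_right_cancel₀ hb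
        linear_combination x a * this + v j * h3
  rw [key]
  refine IsClosed.and ?_ (IsClosed.and ?_ ?_)
  · simp only [Set.setOf_forall]
    exact isClosed_iInter fun i => isClosed_eq (by fun_prop) (by fun_prop)
  · simp only [Set.setOf_forall]
    exact isClosed_iInter fun i => isClosed_eq (by fun_prop) (by fun_prop)
  · exact isClosed_eq (by fun_prop) (by fun_prop)
end

section
/- The ℂˣ-action on X⁺ = (ℂ^{m+1} ∖ {0}) × ℂ^{n+1} given by λ·(u, v) = (λu, λ⁻¹v) is a proper group action: the map ℂˣ × X⁺ → X⁺ × X⁺ sending (λ, x) to (λ·x, x) is a proper map of topological spaces (the preimage of every compact set is compact; equivalently, it is a closed map with compact fibers). In particular the action is free and every orbit is closed in X⁺, so the orbit space X⁺/ℂˣ is a Hausdorff geometric quotient. -/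
/-- The space `X⁺ = (ℂ^{m+1} ∖ {0}) × ℂ^{n+1}`. -/
abbrev Xplus (m n : ℕ) := {u : Fin (m + 1) → ℂ // u ≠ 0} × (Fin (n + 1) → ℂ)

/-- The `ℂˣ`-action `λ·(u, v) = (λu, λ⁻¹v)` on `X⁺`. -/
noncomputable def cxAct (m n : ℕ) (l : ℂˣ) (x : Xplus m n) : Xplus m n :=
  (⟨fun i => (l : ℂ) * x.1.1 i, fun h => x.1.2 (funext fun i => by
      have h' := congrFun h i
      simpa using h')⟩,
   fun j => (l : ℂ)⁻¹ * x.2 j)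

/-- The `ℂˣ`-orbit equivalence on `X⁺`. -/
def orbitSetoid (m n : ℕ) : Setoid (Xplus m n) where
  r x y := ∃ l : ℂˣ, y = cxAct m n l x
  iseqv := by
    refine ⟨fun x => ⟨1, ?_⟩, ?_, ?_⟩
    · refine Prod.ext (Subtype.ext ?_) ?_ <;> funext ι <;> simp [cxAct]
    · rintro x y ⟨l, rfl⟩
      refine ⟨l⁻¹, Prod.ext (Subtype.ext ?_) ?_⟩ <;> funext ι <;>
        simp [cxAct, mul_comm, mul_assoc]
    · rintro x y z ⟨l, rfl⟩ ⟨l', rfl⟩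
      refine ⟨l' * l, Prod.ext (Subtype.ext ?_) ?_⟩ <;> funext ι <;>
        simp only [cxAct, Units.val_mul, mul_inv] <;> ring

lemma cxAct_cont (m n : ℕ) :
    Continuous (fun p : ℂˣ × Xplus m n => cxAct m n p.1 p.2) := by
  have h1 : Continuous (fun p : ℂˣ × Xplus m n => (p.1 : ℂ)) :=
    Units.continuous_val.comp continuous_fst
  have h2 : Continuous (fun p : ℂˣ × Xplus m n => (p.1 : ℂ)⁻¹) :=
    h1.inv₀ (fun p => p.1.ne_zero)
  unfold cxAct
  refine Continuous.prodMk (Continuous.subtype_mk ?_ _) ?_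
  · refine continuous_pi fun i => h1.mul ?_
    exact (continuous_apply i).comp
      (continuous_subtype_val.comp (continuous_fst.comp continuous_snd))
  · refine continuous_pi fun i => h2.mul ?_
    exact (continuous_apply i).comp (continuous_snd.comp continuous_snd)

lemma cxAct_proper (m n : ℕ) :
    IsProperMap (fun p : ℂˣ × Xplus m n => (cxAct m n p.1 p.2, p.2)) := by
  have hc : Continuous (fun p : ℂˣ × Xplus m n => (cxAct m n p.1 p.2, p.2)) :=
    (cxAct_cont m n).prodMk continuous_snd
  rw [isProperMap_iff_ultrafilter]
  refine ⟨hc, ?_⟩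
  rintro U ⟨y, z⟩ hU
  have hy : Filter.Tendsto (fun p : ℂˣ × Xplus m n => cxAct m n p.1 p.2) U (nhds y) :=
    (continuous_fst.tendsto (y, z)).comp hU
  have hz : Filter.Tendsto (fun p : ℂˣ × Xplus m n => p.2) U (nhds z) :=
    (continuous_snd.tendsto (y, z)).comp hU
  have hyi : ∀ i, Filter.Tendsto (fun p : ℂˣ × Xplus m n => (p.1 : ℂ) * p.2.1.1 i) U
      (nhds (y.1.1 i)) := fun i =>
    (((continuous_apply i).comp (continuous_subtype_val.comp continuous_fst)).tendsto y).comp hy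
  have hzi : ∀ i, Filter.Tendsto (fun p : ℂˣ × Xplus m n => p.2.1.1 i) U
      (nhds (z.1.1 i)) := fun i =>
    (((continuous_apply i).comp (continuous_subtype_val.comp continuous_fst)).tendsto z).comp hz
  obtain ⟨i, hi⟩ := Function.ne_iff.mp z.1.2
  have hi' : z.1.1 i ≠ 0 := hi
  have hl : Filter.Tendsto (fun p : ℂˣ × Xplus m n => (p.1 : ℂ)) U
      (nhds (y.1.1 i / z.1.1 i)) := by
    refine ((hyi i).div (hzi i) hi').congr' ?_
    filter_upwards [(hzi i).eventually_ne hi'] with p hp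
    exact mul_div_cancel_right₀ _ hp
  have hne : y.1.1 i / z.1.1 i ≠ 0 := by
    intro h0
    rw [h0] at hl
    apply y.1.2
    funext j
    have := tendsto_nhds_unique (hyi j) (hl.mul (hzi j))
    simpa using this
  have hl' : Filter.Tendsto (fun p : ℂˣ × Xplus m n => p.1) U
      (nhds (Units.mk0 _ hne)) := by
    rw [Units.isEmbedding_val₀.tendsto_nhds_iff]
    exact hl
  have hle : (U : Filter (ℂˣ × Xplus m n)) ≤ nhds (Units.mk0 _ hne, z) :=
    hl'.prodMk_nhds hz
  exact ⟨_, tendsto_nhds_unique ((hc.tendsto _).mono_left hle) hU, hle⟩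

/-- The `ℂˣ`-action on `X⁺ = (ℂ^{m+1} ∖ {0}) × ℂ^{n+1}` is proper: the map
`(λ, x) ↦ (λ·x, x)` is a proper map.  In particular the action is free, every orbit is
closed in `X⁺`, and the orbit space is Hausdorff. -/
theorem cxAction_isProper (m n : ℕ) :
    IsProperMap (fun p : ℂˣ × Xplus m n => (cxAct m n p.1 p.2, p.2)) ∧
    (∀ (l : ℂˣ) (x : Xplus m n), cxAct m n l x = x → l = 1) ∧
    (∀ x : Xplus m n, IsClosed {y | ∃ l : ℂˣ, y = cxAct m n l x}) ∧
    T2Space (Quotient (orbitSetoid m n)) := by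
  have hp := cxAct_proper m n
  have hcl := hp.isClosedMap.isClosed_range
  refine ⟨hp, ?_, ?_, ?_⟩
  · intro l x h
    obtain ⟨i, hi⟩ := Function.ne_iff.mp x.1.2
    have hi' : x.1.1 i ≠ 0 := hi
    have h1 : (l : ℂ) * x.1.1 i = x.1.1 i :=
      congrArg (fun z : Xplus m n => z.1.1 i) h
    exact Units.ext (mul_right_cancel₀ hi' (h1.trans (one_mul _).symm))
  · intro x
    have hx : Continuous (fun y : Xplus m n => (y, x)) := by fun_prop
    convert hcl.preimage hx using 1
    ext y
    constructor
    · rintro ⟨l, rfl⟩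
      exact ⟨(l, x), rfl⟩
    · rintro ⟨⟨l, x'⟩, h⟩
      obtain ⟨h1, h2⟩ := Prod.ext_iff.mp h
      simp only at h1 h2
      subst h2
      exact ⟨l, h1.symm⟩
  · letI := orbitSetoid m n
    have hq : IsOpenQuotientMap (Quotient.mk (orbitSetoid m n)) := by
      refine ⟨Quotient.mk_surjective, continuous_quotient_mk', ?_⟩
      intro V hV
      rw [← isQuotientMap_quotient_mk'.isOpen_preimage]
      have : Quotient.mk (orbitSetoid m n) ⁻¹' (Quotient.mk (orbitSetoid m n) '' V)
          = ⋃ l : ℂˣ, (fun x => cxAct m n l x) ⁻¹' V := by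
        ext x
        simp only [Set.mem_preimage, Set.mem_image, Set.mem_iUnion]
        constructor
        · rintro ⟨v, hv, he⟩
          obtain ⟨l, hl⟩ := Quotient.exact he.symm
          exact ⟨l, hl ▸ hv⟩
        · rintro ⟨l, hl⟩
          exact ⟨_, hl, (Quotient.sound ⟨l, rfl⟩ : Quotient.mk (orbitSetoid m n) x = _).symm⟩
      change IsOpen (Quotient.mk (orbitSetoid m n) ⁻¹' (Quotient.mk (orbitSetoid m n) '' V))
      rw [this]
      exact isOpen_iUnion fun l => hV.preimage
        ((cxAct_cont m n).comp (Continuous.prodMk continuous_const continuous_id))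
    rw [t2Space_iff_of_isOpenQuotientMap hq]
    convert hcl using 1
    ext ⟨y, x⟩
    constructor
    · intro h
      obtain ⟨l, hl⟩ := Quotient.exact (Eq.symm h)
      exact ⟨(l, x), Prod.ext hl.symm rfl⟩
    · rintro ⟨⟨l, x'⟩, h⟩
      obtain ⟨h1, h2⟩ := Prod.ext_iff.mp h
      simp only at h1 h2
      subst h2
      exact (Quotient.sound ⟨l, h1.symm⟩ : Quotient.mk (orbitSetoid m n) x' = _).symm
end
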